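/- Let F be an S-forest with k connected components. Then λ(F) = 2·α(F) = 8k and β(F) = 5k; in particular β(F)/α(F) = 5/4. -/

import Mathlib

open SimpleGraph

/-- A matching of `G`, given as a finite set of edges of `G` that are pairwise non-adjacent. -/
def IsMatchingE {V : Type*} (G : SimpleGraph V) (M : Finset (Sym2 V)) : Prop :=
  ↑M ⊆ G.edgeSet ∧ ∀ e ∈ M, ∀ f ∈ M, e ≠ f → ∀ v : V, ¬(v ∈ e ∧ v ∈ f)

/-- A vertex is covered by a set of edges if some edge of it is incident to the vertex. -/
def Covers {V : Type*} (M : Finset (Sym2 V)) (v : V) : Prop := ∃ e ∈ M, v ∈ e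

/-- `β(G)`: the maximum size of a matching of `G`. -/
noncomputable def gBeta {V : Type*} (G : SimpleGraph V) : ℕ :=
  sSup {n | ∃ M : Finset (Sym2 V), IsMatchingE G M ∧ M.card = n}

/-- `λ(G)`: the maximum of `|H| + |H'|` over pairs `(H, H')` of disjoint matchings of `G`. -/
noncomputable def gLam {V : Type*} (G : SimpleGraph V) : ℕ :=
  sSup {n | ∃ H H' : Finset (Sym2 V), IsMatchingE G H ∧ IsMatchingE G H' ∧
    Disjoint H H' ∧ H.card + H'.card = n}

/-- `α(G)`: the maximum of `|H|` over pairs `(H, H')` of disjoint matchings of `G`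
with `|H| + |H'| = λ(G)`. -/
noncomputable def gAlpha {V : Type*} (G : SimpleGraph V) : ℕ :=
  sSup {n | ∃ H H' : Finset (Sym2 V), IsMatchingE G H ∧ IsMatchingE G H' ∧
    Disjoint H H' ∧ H.card + H'.card = gLam G ∧ H.card = n}

/-- `β₁(G)`: the maximum of `β(G \ F)` over maximum matchings `F` of `G`. -/
noncomputable def gBeta1 {V : Type*} (G : SimpleGraph V) : ℕ :=
  sSup {n | ∃ F : Finset (Sym2 V), IsMatchingE G F ∧ F.card = gBeta G ∧
    gBeta (G.deleteEdges ↑F) = n}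

/-- Membership in `M₂(G)`: `(H, H')` is a pair of disjoint matchings of `G` with
`|H| + |H'| = λ(G)` and `|H| = α(G)`. -/
def InM2 {V : Type*} (G : SimpleGraph V) (H H' : Finset (Sym2 V)) : Prop :=
  IsMatchingE G H ∧ IsMatchingE G H' ∧ Disjoint H H' ∧
  H.card + H'.card = gLam G ∧ H.card = gAlpha G

/-- Membership in `M₂(G, M)`: pairs from `M₂(G)` maximizing `|M ∩ (H ∪ H')|`. -/
def InM2M {V : Type*} [DecidableEq V] (G : SimpleGraph V) (M H H' : Finset (Sym2 V)) : Prop :=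
  InM2 G H H' ∧ ∀ K K' : Finset (Sym2 V), InM2 G K K' →
    (M ∩ (K ∪ K')).card ≤ (M ∩ (H ∪ H')).card

/-- The degree of a vertex `v` in the graph `F`. -/
noncomputable def fdeg {V : Type*} (F : SimpleGraph V) (v : V) : ℕ := (F.neighborSet v).ncard

/-- The spanner: two paths `a₁a₂a₃a₄a₅` and `b₁b₂b₃b₄b₅` joined by the edge `a₃b₃`.
Vertices `0..4` are `a₁..a₅` and `5..9` are `b₁..b₅`. -/
def Spanner10 : SimpleGraph (Fin 10) :=
  SimpleGraph.fromEdgeSet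
    {s(0, 1), s(1, 2), s(2, 3), s(3, 4), s(5, 6), s(6, 7), s(7, 8), s(8, 9), s(2, 7)}

/-- An S-forest: every connected component is isomorphic to the spanner. -/
def IsSForest {V : Type*} (F : SimpleGraph V) : Prop :=
  ∀ c : F.ConnectedComponent, Nonempty ((F.induce c.supp) ≃g Spanner10)

/-- `U(F)`: edges of `F` incident to a vertex of degree 1. -/
def USet {V : Type*} (F : SimpleGraph V) : Set (Sym2 V) :=
  {e | e ∈ F.edgeSet ∧ ∃ v ∈ e, fdeg F v = 1}

/-- `L(F)`: edges of `F` not in `U(F)` incident to a vertex of degree 2. -/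
def LSet {V : Type*} (F : SimpleGraph V) : Set (Sym2 V) :=
  {e | e ∈ F.edgeSet ∧ e ∉ USet F ∧ ∃ v ∈ e, fdeg F v = 2}

/-- `w` is the base of the 1-vertex `u` of `F`: a 3-vertex at `F`-distance 2 from `u`. -/
def IsBase {V : Type*} (F : SimpleGraph V) (u w : V) : Prop :=
  fdeg F w = 3 ∧ F.dist u w = 2

/-- `Δ(G, F)`: edges of `G` joining a 1-vertex of `F` to its base. -/
def DeltaSet {V : Type*} (G F : SimpleGraph V) : Set (Sym2 V) :=
  {e | e ∈ G.edgeSet ∧ ∃ u w : V, e = s(u, w) ∧ fdeg F u = 1 ∧ IsBase F u w}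

/-- `B(G, F) = E(G) \ (U(F) ∪ L(F) ∪ Δ(G, F))`. -/
def BSet {V : Type*} (G F : SimpleGraph V) : Set (Sym2 V) :=
  G.edgeSet \ (USet F ∪ LSet F ∪ DeltaSet G F)

/-- Condition (a): no 1-vertex of `F` is incident to an edge from `B(G, F)`. -/
def CondA {V : Type*} (G F : SimpleGraph V) : Prop :=
  ∀ v : V, fdeg F v = 1 → ∀ e ∈ BSet G F, v ∉ e

/-- Condition (b): if a 1-vertex `u` of `F` is incident to an edge from `Δ(G, F)`, then
the 2-vertex of `F` adjacent to `u` in `F` is not incident to any edge from `B(G, F)`. -/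
def CondB {V : Type*} (G F : SimpleGraph V) : Prop :=
  ∀ u v : V, fdeg F u = 1 → (∃ e ∈ DeltaSet G F, u ∈ e) →
    F.Adj u v → fdeg F v = 2 → ∀ e ∈ BSet G F, v ∉ e

/-- Condition (c): for every `L(F)`-`B(G, F)` alternating even closed trail of `G`
containing an edge joining two 2-vertices of `F`, the graph formed by its edges belonging
to `B(G, F)` is not bipartite (2-colorable). -/
def CondC {V : Type*} (G F : SimpleGraph V) : Prop :=
  ∀ (n : ℕ) (e : ℕ → Sym2 V),
    1 ≤ n →
    (∀ i j, i < 2 * n → j < 2 * n → e i = e j → i = j) →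
    (∀ i, i < 2 * n → e i ∈ G.edgeSet) →
    (∀ i, i + 1 < 2 * n → ∃ v : V, v ∈ e i ∧ v ∈ e (i + 1)) →
    (∃ v : V, v ∈ e (2 * n - 1) ∧ v ∈ e 0) →
    (∀ i, i < 2 * n → (i % 2 = 0 → e i ∈ LSet F) ∧ (i % 2 = 1 → e i ∈ BSet G F)) →
    (∃ i, i < 2 * n ∧ ∀ v ∈ e i, fdeg F v = 2) →
    ¬ (SimpleGraph.fromEdgeSet {f | ∃ i, i < 2 * n ∧ f = e i ∧ f ∈ BSet G F}).Colorable 2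


/-- first endpoint of the nine spanner edges -/
def spU : Fin 9 → Fin 10 := ![0, 1, 2, 3, 5, 6, 7, 8, 2]
/-- second endpoint of the nine spanner edges -/
def spW : Fin 9 → Fin 10 := ![1, 2, 3, 4, 6, 7, 8, 9, 7]

/-- the nine spanner edges -/
def spE (t : Fin 9) : Sym2 (Fin 10) := s(spU t, spW t)

theorem spE_inj : Function.Injective spE := by
  unfold Function.Injective; decide

theorem sp_adj (i j : Fin 10) : Spanner10.Adj i j ↔ ∃ t, spE t = s(i, j) := by
  unfold Spanner10
  simp only [SimpleGraph.fromEdgeSet_adj, Set.mem_insert_iff, Set.mem_singleton_iff]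
  revert i j
  decide

theorem exists_edges {V : Type*} (F : SimpleGraph V) (hF : IsSForest F) :
    ∃ p : F.ConnectedComponent × Fin 10 → V, Function.Injective p ∧
      ∀ e : Sym2 V, e ∈ F.edgeSet ↔
        ∃ c t, e = (spE t).map (fun i => p (c, i)) := by
  have φ := fun c => Classical.choice (hF c)
  refine ⟨fun x => ((φ x.1).symm x.2).1, ?_, ?_⟩
  · rintro ⟨c, i⟩ ⟨d, j⟩ h
    simp only at h
    have hc : F.connectedComponentMk ((φ c).symm i).1 = c := ((φ c).symm i).2
    have hd : F.connectedComponentMk ((φ d).symm j).1 = d := ((φ d).symm j).2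
    have : c = d := by rw [← hc, ← hd, h]
    subst this
    have := (φ c).symm.injective (Subtype.ext h)
    rw [this]
  · intro e
    induction e using Sym2.ind with
    | _ v w =>
    constructor
    · intro h
      rw [SimpleGraph.mem_edgeSet] at h
      have hv : v ∈ (F.connectedComponentMk v).supp := rfl
      have hw : w ∈ (F.connectedComponentMk v).supp :=
        (SimpleGraph.ConnectedComponent.sound h.reachable).symm
      have h2 : (F.induce (F.connectedComponentMk v).supp).Adj ⟨v, hv⟩ ⟨w, hw⟩ := h
      rw [← (φ _).map_adj_iff, sp_adj] at h2
      obtain ⟨t, ht⟩ := h2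
      refine ⟨F.connectedComponentMk v, t, ?_⟩
      rw [ht]
      simp
    · rintro ⟨c, t, h⟩
      rw [h]
      have : Spanner10.Adj (spU t) (spW t) := (sp_adj _ _).2 ⟨t, rfl⟩
      rw [← (φ c).symm.map_adj_iff] at this
      exact this

theorem max_eq {S : Set ℕ} {n : ℕ} (h1 : n ∈ S) (h2 : ∀ m ∈ S, m ≤ n) : sSup S = n :=
  IsGreatest.csSup_eq ⟨h1, h2⟩

/-- Two spanner edges share an endpoint. -/
def Conf (s t : Fin 9) : Prop := ∃ i, i ∈ spE s ∧ i ∈ spE t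

instance (s t : Fin 9) : Decidable (Conf s t) := by unfold Conf; infer_instance

section
variable {V : Type*} [DecidableEq V] {F : SimpleGraph V} {C : Type*} [Fintype C] [DecidableEq C]
  {p : C × Fin 10 → V}

/-- The edge of index `t` in the component `c`. -/
def edg (p : C × Fin 10 → V) (x : C × Fin 9) : Sym2 V := (spE x.2).map (fun i => p (x.1, i))

theorem mem_edg (v : V) (x : C × Fin 9) : v ∈ edg p x ↔ ∃ i ∈ spE x.2, p (x.1, i) = v := by
  unfold edg; exact Sym2.mem_map

theorem edg_conf (hp : Function.Injective p) (x y : C × Fin 9) :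
    (∃ v, v ∈ edg p x ∧ v ∈ edg p y) ↔ x.1 = y.1 ∧ Conf x.2 y.2 := by
  constructor
  · rintro ⟨v, h1, h2⟩
    rw [mem_edg] at h1 h2
    obtain ⟨i, hi, rfl⟩ := h1
    obtain ⟨j, hj, h⟩ := h2
    have := hp h
    simp only [Prod.mk.injEq] at this
    obtain ⟨h3, rfl⟩ := this
    exact ⟨h3.symm, j, hi, hj⟩
  · rintro ⟨h, i, h1, h2⟩
    exact ⟨p (x.1, i), (mem_edg _ _).2 ⟨i, h1, rfl⟩, (mem_edg _ _).2 ⟨i, h2, by rw [h]⟩⟩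

theorem edg_inj (hp : Function.Injective p) : Function.Injective (edg p) := by
  rintro ⟨c, s⟩ ⟨d, t⟩ h
  have : c = d := by
    refine ((edg_conf hp (c, s) (d, t)).1 ⟨p (c, spU s), ?_, ?_⟩).1
    · exact (mem_edg _ _).2 ⟨spU s, by simp [spE], rfl⟩
    · rw [← h]; exact (mem_edg _ _).2 ⟨spU s, by simp [spE], rfl⟩
  subst this
  have h3 : Function.Injective (fun i => p (c, i)) := fun i j hij => by simpa using hp hij
  have : s = t := spE_inj (Sym2.map.injective h3 h)
  rw [this]

theorem build (hp : Function.Injective p)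
    (he : ∀ e : Sym2 V, e ∈ F.edgeSet ↔ ∃ c t, e = edg p (c, t))
    (S : Finset (Fin 9)) (hS : ∀ s ∈ S, ∀ t ∈ S, s ≠ t → ¬ Conf s t) :
    IsMatchingE F ((Finset.univ ×ˢ S).image (edg p)) ∧
      ((Finset.univ ×ˢ S).image (edg p)).card = Fintype.card C * S.card := by
  refine ⟨⟨?_, ?_⟩, ?_⟩
  · intro e h
    simp only [Finset.coe_image, Set.mem_image] at h
    obtain ⟨x, -, rfl⟩ := h
    exact (he _).2 ⟨x.1, x.2, rfl⟩
  · intro e h f h' hne v hv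
    rw [Finset.mem_image] at h h'
    obtain ⟨x, hx, rfl⟩ := h
    obtain ⟨y, hy, rfl⟩ := h'
    have := (edg_conf hp x y).1 ⟨v, hv⟩
    refine hS x.2 (Finset.mem_product.1 hx).2 y.2 (Finset.mem_product.1 hy).2 ?_ this.2
    intro h
    exact hne (by rw [Prod.ext this.1 h])
  · rw [Finset.card_image_of_injective _ (edg_inj hp), Finset.card_product, Finset.card_univ]

theorem card_eq (hp : Function.Injective p)
    (he : ∀ e : Sym2 V, e ∈ F.edgeSet ↔ ∃ c t, e = edg p (c, t))
    (M : Finset (Sym2 V)) (hM : IsMatchingE F M) :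
    M.card = ∑ c : C, ∑ t : Fin 9, if edg p (c, t) ∈ M then 1 else 0 := by
  rw [← Fintype.sum_prod_type' (f := fun c t => if edg p (c, t) ∈ M then 1 else 0),
    ← Finset.card_filter]
  rw [← Finset.card_image_of_injective _ (edg_inj hp)]
  congr 1
  ext e
  simp only [Finset.mem_image, Finset.mem_filter, Finset.mem_univ, true_and]
  constructor
  · intro h
    obtain ⟨c, t, rfl⟩ := (he e).1 (hM.1 h)
    exact ⟨(c, t), h, rfl⟩
  · rintro ⟨x, h, rfl⟩
    exact h

theorem local_le (hp : Function.Injective p)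
    (M : Finset (Sym2 V)) (hM : IsMatchingE F M) (c : C) (s t : Fin 9) (hne : s ≠ t)
    (hc : Conf s t) :
    (if edg p (c, s) ∈ M then 1 else 0) + (if edg p (c, t) ∈ M then 1 else 0) ≤ 1 := by
  by_cases h1 : edg p (c, s) ∈ M <;> by_cases h2 : edg p (c, t) ∈ M <;> simp [h1, h2]
  obtain ⟨v, hv⟩ := (edg_conf hp (c, s) (c, t)).2 ⟨rfl, hc⟩
  refine hM.2 _ h1 _ h2 ?_ v hv
  intro h
  have := edg_inj hp h
  simp at this
  exact hne this

theorem ind_disj (H H' : Finset (Sym2 V)) (hd : Disjoint H H') (e : Sym2 V) :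
    (if e ∈ H then 1 else 0) + (if e ∈ H' then 1 else 0) ≤ 1 := by
  by_cases h1 : e ∈ H <;> by_cases h2 : e ∈ H' <;> simp [h1, h2]
  exact Finset.disjoint_left.1 hd h1 h2

/-- The constraints satisfied by the indicator vector of a matching in a spanner. -/
def Cons (x : Fin 9 → ℕ) : Prop :=
  x 0 + x 1 ≤ 1 ∧ x 1 + x 2 ≤ 1 ∧ x 2 + x 3 ≤ 1 ∧ x 4 + x 5 ≤ 1 ∧ x 5 + x 6 ≤ 1 ∧
  x 6 + x 7 ≤ 1 ∧ x 1 + x 8 ≤ 1 ∧ x 2 + x 8 ≤ 1 ∧ x 5 + x 8 ≤ 1 ∧ x 6 + x 8 ≤ 1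

theorem cons_of (hp : Function.Injective p)
    (M : Finset (Sym2 V)) (hM : IsMatchingE F M) (c : C) :
    Cons (fun t => if edg p (c, t) ∈ M then 1 else 0) := by
  refine ⟨?_, ?_, ?_, ?_, ?_, ?_, ?_, ?_, ?_, ?_⟩ <;>
  exact local_le hp M hM c _ _ (by decide) (by decide)

theorem tri9 (z : Fin 9 → ℕ) (hz : Cons z) : z 1 + z 2 + z 8 ≤ 1 ∧ z 5 + z 6 + z 8 ≤ 1 ∧
      z 0 + z 1 ≤ 1 ∧ z 2 + z 3 ≤ 1 ∧ z 4 + z 5 ≤ 1 ∧ z 6 + z 7 ≤ 1 := by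
  unfold Cons at hz
  omega

theorem sum9 (z : Fin 9 → ℕ) :
    ∑ t, z t = z 0 + z 1 + z 2 + z 3 + z 4 + z 5 + z 6 + z 7 + z 8 := by
  rw [Fin.sum_univ_castSucc, Fin.sum_univ_eight]
  rfl

theorem cons_beta (x : Fin 9 → ℕ) (h : Cons x) : ∑ t, x t ≤ 5 := by
  have hx := tri9 x h
  rw [sum9]
  omega

theorem cons_lam (x y : Fin 9 → ℕ) (h : Cons x) (h' : Cons y) (hd : ∀ t, x t + y t ≤ 1) :
    ∑ t, x t + ∑ t, y t ≤ 8 ∧ 2 * ∑ t, x t + ∑ t, y t ≤ 12 := by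
  have h0 := hd 0
  have h1 := hd 1
  have h2 := hd 2
  have h3 := hd 3
  have h4 := hd 4
  have h5 := hd 5
  have h6 := hd 6
  have h7 := hd 7
  have h8 := hd 8
  have hx := tri9 x h
  have hy := tri9 y h'
  rw [sum9, sum9]
  obtain ⟨x1, x2, x3, x4, x5, x6⟩ := hx
  obtain ⟨y1, y2, y3, y4, y5, y6⟩ := hy
  constructor <;> linarith [Nat.zero_le (x 8), Nat.zero_le (y 8)]

theorem bound_beta (hp : Function.Injective p)
    (he : ∀ e : Sym2 V, e ∈ F.edgeSet ↔ ∃ c t, e = edg p (c, t))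
    (M : Finset (Sym2 V)) (hM : IsMatchingE F M) : M.card ≤ 5 * Fintype.card C := by
  rw [card_eq hp he M hM]
  refine (Finset.sum_le_card_nsmul _ _ 5 fun c _ => cons_beta _ (cons_of hp M hM c)).trans ?_
  simp [mul_comm]

theorem bound_lam (hp : Function.Injective p)
    (he : ∀ e : Sym2 V, e ∈ F.edgeSet ↔ ∃ c t, e = edg p (c, t))
    (H H' : Finset (Sym2 V)) (hH : IsMatchingE F H) (hH' : IsMatchingE F H')
    (hd : Disjoint H H') :
    H.card + H'.card ≤ 8 * Fintype.card C ∧ 2 * H.card + H'.card ≤ 12 * Fintype.card C := by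
  have key := fun c => cons_lam _ _ (cons_of hp H hH c) (cons_of hp H' hH' c)
    (fun t => ind_disj H H' hd (edg p (c, t)))
  rw [card_eq hp he H hH, card_eq hp he H' hH', Finset.mul_sum, ← Finset.sum_add_distrib,
    ← Finset.sum_add_distrib]
  constructor
  · refine (Finset.sum_le_card_nsmul _ _ 8 fun c _ => (key c).1).trans ?_
    simp [mul_comm]
  · refine (Finset.sum_le_card_nsmul _ _ 12 fun c _ => (key c).2).trans ?_
    simp [mul_comm]

end

/-- for an S-forest `F` with `k` connected components:
`λ(F) = 2α(F) = 8k` and `β(F) = 5k`; in particular `β(F)/α(F) = 5/4`. -/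
theorem stmt10 {V : Type*} [Fintype V] [DecidableEq V] (F : SimpleGraph V) (k : ℕ)
    (hF : IsSForest F) (hk : Nat.card F.ConnectedComponent = k) :
    gLam F = 2 * gAlpha F ∧ gLam F = 8 * k ∧ gBeta F = 5 * k ∧
    4 * gBeta F = 5 * gAlpha F := by
  classical
  obtain ⟨p, hp, he⟩ := exists_edges F hF
  replace he : ∀ e : Sym2 V, e ∈ F.edgeSet ↔ ∃ c t, e = edg p (c, t) := he
  rw [Nat.card_eq_fintype_card] at hk
  obtain ⟨m1, c1⟩ := build hp he {0, 3, 4, 7, 8} (by decide)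
  obtain ⟨m2, c2⟩ := build hp he {0, 2, 4, 6} (by decide)
  obtain ⟨m3, c3⟩ := build hp he {1, 3, 5, 7} (by decide)
  have hd : Disjoint ((Finset.univ ×ˢ ({0, 2, 4, 6} : Finset (Fin 9))).image (edg p))
      ((Finset.univ ×ˢ ({1, 3, 5, 7} : Finset (Fin 9))).image (edg p)) := by
    rw [Finset.disjoint_image (edg_inj hp), Finset.disjoint_product]
    right; decide
  rw [hk] at c1 c2 c3
  replace c1 := c1.trans (show _ = k * 5 from rfl)
  replace c2 := c2.trans (show _ = k * 4 from rfl)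
  replace c3 := c3.trans (show _ = k * 4 from rfl)
  have hB : gBeta F = 5 * k := by
    refine max_eq ⟨_, m1, by omega⟩ ?_
    rintro m ⟨M, hM, rfl⟩
    rw [← hk]; exact bound_beta hp he M hM
  have hL : gLam F = 8 * k := by
    refine max_eq ⟨_, _, m2, m3, hd, by omega⟩ ?_
    rintro m ⟨H, H', h, h', hdd, rfl⟩
    rw [← hk]; exact (bound_lam hp he H H' h h' hdd).1
  have hA : gAlpha F = 4 * k := by
    refine max_eq ⟨_, _, m2, m3, hd, by omega, by omega⟩ ?_
    rintro m ⟨H, H', h, h', hdd, hs, rfl⟩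
    have := (bound_lam hp he H H' h h' hdd).2
    omega
  omega
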